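/- Let f ∈ L¹(𝕋^d) have mean zero and suppose that ∫ f·φ dx = 0 for every smooth divergence-free mean-zero vector field φ on 𝕋^d. Then f = ∇p for some function p ∈ W^{1,1}(𝕋^d). -/

import Mathlib

open MeasureTheory
open scoped BigOperators InnerProductSpace

noncomputable section

/-- `2π`-periodicity in every coordinate direction (functions on `ℝ^d` model fields on the
flat torus `𝕋^d = [-π,π]^d`). -/
def Periodic2pi {d : ℕ} {E : Type*} (f : (Fin d → ℝ) → E) : Prop :=
  ∀ (x : Fin d → ℝ) (i : Fin d), f (x + Pi.single i (2 * Real.pi)) = f x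

/-- the fundamental domain `[-π,π]^d`. -/
def box (d : ℕ) : Set (Fin d → ℝ) := Set.univ.pi fun _ => Set.Icc (-Real.pi) Real.pi

/-- partial derivative `∂_i`. -/
def pd {d : ℕ} {E : Type*} [NormedAddCommGroup E] [NormedSpace ℝ E]
    (i : Fin d) (f : (Fin d → ℝ) → E) (x : Fin d → ℝ) : E :=
  fderiv ℝ f x (Pi.single i 1)

lemma box_eq (d : ℕ) : box d = Set.Icc (fun _ => -Real.pi) (fun _ => Real.pi) := by
  unfold box
  exact Set.pi_univ_Icc _ _

lemma isCompact_box (d : ℕ) : IsCompact (box d) := by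
  rw [box_eq]; exact isCompact_Icc

lemma measurableSet_box (d : ℕ) : MeasurableSet (box d) := by
  rw [box_eq]; exact measurableSet_Icc

instance finite_box (d : ℕ) : IsFiniteMeasure (volume.restrict (box d)) :=
  ⟨by simpa using (isCompact_box d).measure_lt_top⟩

/-- averaging-type operator. -/
def SS {d : ℕ} {V : Type} [NormedAddCommGroup V] [NormedSpace ℝ V]
    (w : (Fin d → ℝ) → ℝ) (a : (Fin d → ℝ) → (Fin d → ℝ)) (χ : (Fin d → ℝ) → V)
    (x : Fin d → ℝ) : V :=
  ∫ y in box d, w y • χ (x + a y)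

lemma SS_hasFDerivAt {d : ℕ} {V : Type} [NormedAddCommGroup V] [NormedSpace ℝ V]
    {w : (Fin d → ℝ) → ℝ} {a : (Fin d → ℝ) → (Fin d → ℝ)} (hw : Continuous w)
    (ha : Continuous a) {χ : (Fin d → ℝ) → V} (hχ : ContDiff ℝ 1 χ) (x : Fin d → ℝ) :
    HasFDerivAt (SS w a χ) (SS w a (fderiv ℝ χ) x) x := by
  have hχ' : Continuous (fderiv ℝ χ) := hχ.continuous_fderiv (by norm_num)
  have hcχ := hχ.continuous
  have hcont : Continuous (fun p : (Fin d → ℝ) × (Fin d → ℝ) => w p.2 • fderiv ℝ χ (p.1 + a p.2)) := by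
    fun_prop
  obtain ⟨C, hC⟩ := ((isCompact_closedBall x 1).prod (isCompact_box d)).exists_bound_of_continuousOn
    hcont.continuousOn
  unfold SS
  refine hasFDerivAt_integral_of_dominated_of_fderiv_le (𝕜 := ℝ)
    (F := fun x y => w y • χ (x + a y)) (F' := fun x y => w y • fderiv ℝ χ (x + a y))
    (bound := fun _ => C)
    (Metric.closedBall_mem_nhds x one_pos) ?_ ?_ ?_ ?_ ?_ ?_
  · refine Filter.Eventually.of_forall fun x' => ?_
    exact Continuous.aestronglyMeasurable (by fun_prop)
  · exact ContinuousOn.integrableOn_compact (isCompact_box d)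
      (Continuous.continuousOn (by fun_prop))
  · exact Continuous.aestronglyMeasurable (by fun_prop)
  · refine (ae_restrict_iff' (measurableSet_box d)).2 (Filter.Eventually.of_forall ?_)
    intro y hy x' hx'
    exact hC (x', y) ⟨hx', hy⟩
  · exact integrable_const _
  · refine Filter.Eventually.of_forall fun y x' _ => ?_
    have h1 : HasFDerivAt χ (fderiv ℝ χ (x' + a y)) (x' + a y) :=
      (hχ.differentiable (by norm_num) _).hasFDerivAt
    have h2 : HasFDerivAt (fun z => χ (z + a y)) (fderiv ℝ χ (x' + a y)) x' :=
      (hasFDerivAt_comp_add_right (a y)).2 h1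
    exact h2.const_smul (w y)

lemma SS_contDiff_nat {d : ℕ} (n : ℕ) : ∀ {V : Type} [NormedAddCommGroup V] [NormedSpace ℝ V]
    {w : (Fin d → ℝ) → ℝ} {a : (Fin d → ℝ) → (Fin d → ℝ)} (_ : Continuous w)
    (_ : Continuous a) {χ : (Fin d → ℝ) → V} (_ : ContDiff ℝ (⊤ : ℕ∞) χ),
    ContDiff ℝ n (SS w a χ) := by
  induction n with
  | zero =>
    intro V _ _ w a hw ha χ hχ
    have h1 : ContDiff ℝ 1 χ := hχ.of_le (by exact_mod_cast le_top)
    have hd : Differentiable ℝ (SS w a χ) := fun x =>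
      (SS_hasFDerivAt hw ha h1 x).differentiableAt
    exact contDiff_zero.2 hd.continuous
  | succ n ih =>
    intro V _ _ w a hw ha χ hχ
    have h1 : ContDiff ℝ 1 χ := hχ.of_le (by exact_mod_cast le_top)
    have hd : Differentiable ℝ (SS w a χ) := fun x =>
      (SS_hasFDerivAt hw ha h1 x).differentiableAt
    have hf : fderiv ℝ (SS w a χ) = SS w a (fderiv ℝ χ) := by
      ext1 x; exact (SS_hasFDerivAt hw ha h1 x).fderiv
    push_cast
    refine contDiff_succ_iff_fderiv.2 ⟨hd, by simp, ?_⟩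
    rw [hf]
    exact ih hw ha (hχ.fderiv_right (by exact_mod_cast le_top))

lemma SS_contDiff {d : ℕ} {V : Type} [NormedAddCommGroup V] [NormedSpace ℝ V]
    {w : (Fin d → ℝ) → ℝ} {a : (Fin d → ℝ) → (Fin d → ℝ)} (hw : Continuous w)
    (ha : Continuous a) {χ : (Fin d → ℝ) → V} (hχ : ContDiff ℝ (⊤ : ℕ∞) χ) :
    ContDiff ℝ (⊤ : ℕ∞) (SS w a χ) :=
  contDiff_infty.2 fun n => SS_contDiff_nat n hw ha hχ

lemma SS_periodic {d : ℕ} {V : Type} [NormedAddCommGroup V] [NormedSpace ℝ V]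
    (w : (Fin d → ℝ) → ℝ) (a : (Fin d → ℝ) → (Fin d → ℝ)) {χ : (Fin d → ℝ) → V}
    (hχ : Periodic2pi χ) : Periodic2pi (SS w a χ) := by
  intro x i
  unfold SS
  congr 1; ext y
  rw [add_right_comm, hχ]

/-- integral of a partial derivative vanishes if opposite face values agree. -/
lemma integral_pd_eq_zero {d : ℕ} (k : Fin d) {F : (Fin d → ℝ) → ℝ} (hF : ContDiff ℝ 1 F)
    (hface : ∀ y, F (Function.update y k Real.pi) = F (Function.update y k (-Real.pi))) :
    ∫ y in box d, pd k F y = 0 := by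
  obtain ⟨n, rfl⟩ : ∃ n, d = n + 1 := ⟨d - 1, by have := k.2; omega⟩
  have hF' : Continuous (fderiv ℝ F) := hF.continuous_fderiv (by norm_num)
  have key := integral_divergence_of_hasFDerivAt_off_countable'
    (a := fun _ : Fin (n+1) => -Real.pi) (b := fun _ => Real.pi)
    (fun i => by simpa using by linarith [Real.pi_pos])
    (fun i => if i = k then F else 0) (fun i => if i = k then fderiv ℝ F else 0) ∅
    Set.countable_empty ?_ ?_ ?_
  · have h1 : ∀ x, ∑ i, (if i = k then fderiv ℝ F else 0) x (Pi.single i 1) = pd k F x := by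
      intro x
      rw [Finset.sum_eq_single k]
      · simp [pd]
      · intro b _ hb; simp [hb]
      · simp
    simp only [h1] at key
    rw [box_eq, key]
    refine Finset.sum_eq_zero fun i _ => ?_
    by_cases hi : i = k
    · subst hi
      simp only [if_true]
      rw [sub_eq_zero]
      congr 1; ext x
      have := hface (Fin.insertNth i (0:ℝ) x)
      simpa using this
    · simp [hi]
  · intro i; by_cases hi : i = k <;> simp [hi, hF.continuous.continuousOn]
    exact continuousOn_const
  · intro x _ i
    by_cases hi : i = k
    · simpa [hi] using (hF.differentiable (by norm_num) x).hasFDerivAt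
    · simp only [hi, if_false]; exact hasFDerivAt_const (0:ℝ) x
  · refine ContinuousOn.integrableOn_compact isCompact_Icc (Continuous.continuousOn ?_)
    refine continuous_finsetSum _ fun i _ => ?_
    by_cases hi : i = k
    · simp only [hi, if_true]; fun_prop
    · simp only [hi, if_false]; exact continuous_const

lemma periodic_update {d : ℕ} {E : Type*} {F : (Fin d → ℝ) → E} (hF : Periodic2pi F) (k : Fin d)
    (y : Fin d → ℝ) :
    F (Function.update y k Real.pi) = F (Function.update y k (-Real.pi)) := by
  rw [← hF (Function.update y k (-Real.pi)) k]
  congr 1; ext j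
  by_cases h : j = k
  · subst h; simp; ring
  · simp [h]

/-- the period lattice basis. -/
def lb (d : ℕ) : Module.Basis (Fin d) ℝ (Fin d → ℝ) :=
  (Pi.basisFun ℝ (Fin d)).isUnitSMul (w := fun _ => 2 * Real.pi)
    (fun _ => (isUnit_iff_ne_zero.2 (by positivity)))

lemma lb_apply (d : ℕ) (i : Fin d) : lb d i = Pi.single i (2 * Real.pi) := by
  simp [lb, Module.Basis.isUnitSMul_apply, ← Pi.single_smul]

lemma periodic_lattice {d : ℕ} {E : Type*} {F : (Fin d → ℝ) → E} (hF : Periodic2pi F)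
    (g : Submodule.span ℤ (Set.range (lb d))) (x : Fin d → ℝ) : F (g +ᵥ x) = F x := by
  obtain ⟨g, hg⟩ := g
  change F (g + x) = F x
  induction hg using Submodule.span_induction generalizing x with
  | mem v hv =>
    obtain ⟨i, rfl⟩ := hv
    rw [lb_apply, add_comm, hF]
  | zero => simp
  | add v w _ _ h1 h2 => rw [add_assoc, h1, h2]
  | smul n v _ h =>
    have hp : Function.Periodic F v := fun z => by rw [add_comm, h]
    have := hp.zsmul n x
    rwa [add_comm] at this

open scoped Pointwise in
lemma fund_ae (d : ℕ) :
    ((fun _ => -Real.pi : Fin d → ℝ) +ᵥ ZSpan.fundamentalDomain (lb d)) =ᵐ[volume] box d := by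
  have : ((fun _ => -Real.pi : Fin d → ℝ) +ᵥ ZSpan.fundamentalDomain (lb d)) =
      Set.univ.pi fun _ => Set.Ico (-Real.pi) Real.pi := by
    ext x
    rw [Set.mem_vadd_set_iff_neg_vadd_mem, ZSpan.mem_fundamentalDomain]
    simp only [Set.mem_pi, Set.mem_univ, true_imp_iff]
    refine forall_congr' fun i => ?_
    have : (lb d).repr (-(fun _ => -Real.pi : Fin d → ℝ) +ᵥ x) i = (2 * Real.pi)⁻¹ * (Real.pi + x i) := by
      simp [lb, Module.Basis.repr_isUnitSMul, Units.smul_def]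
      ring
    rw [this, inv_mul_eq_div]
    have hp : 0 < 2 * Real.pi := by positivity
    simp only [Set.mem_Ico, le_div_iff₀ hp, div_lt_iff₀ hp]
    constructor <;> rintro ⟨h1, h2⟩ <;> constructor <;> linarith
  rw [this, box_eq]
  exact Measure.univ_pi_Ico_ae_eq_Icc

instance lattice_inv (d : ℕ) : VAddInvariantMeasure (Submodule.span ℤ (Set.range (lb d)))
    (Fin d → ℝ) volume :=
  ⟨fun c s _ => measure_preimage_add volume (c : Fin d → ℝ) s⟩

open scoped Pointwise in
lemma isFund (d : ℕ) (a : Fin d → ℝ) :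
    IsAddFundamentalDomain (Submodule.span ℤ (Set.range (lb d))) (a +ᵥ ZSpan.fundamentalDomain (lb d))
      (volume : Measure (Fin d → ℝ)) := by
  have : VAddCommClass (Fin d → ℝ) (Submodule.span ℤ (Set.range (lb d))) (Fin d → ℝ) :=
    ⟨fun m n x => by
      change m + ((n : Fin d → ℝ) + x) = n + (m + x)
      abel⟩
  exact (ZSpan.isAddFundamentalDomain (lb d) volume).vadd_of_comm a

open scoped Pointwise in
lemma integrableOn_translate {d : ℕ} {E : Type*} [NormedAddCommGroup E]
    {F : (Fin d → ℝ) → E} (hF : Periodic2pi F) (a : Fin d → ℝ) (hi : IntegrableOn F (box d)) :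
    IntegrableOn (fun x => F (x + a)) (box d) := by
  rw [← integrableOn_congr_set_ae (fund_ae d)] at hi ⊢
  have h2 := ((isFund d (fun _ => -Real.pi)).integrableOn_iff
    (isFund d (a + (fun _ => -Real.pi))) (periodic_lattice hF)).1 hi
  rw [← vadd_vadd] at h2
  have h3 := ((measurePreserving_vadd a (volume : Measure (Fin d → ℝ))).integrableOn_image
    (measurableEmbedding_const_vadd a)).1 h2
  refine h3.congr_fun_ae (Filter.Eventually.of_forall fun x => ?_)
  simp [add_comm]

open scoped Pointwise in
lemma integral_translate {d : ℕ} {E : Type*} [NormedAddCommGroup E] [NormedSpace ℝ E]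
    {F : (Fin d → ℝ) → E} (hF : Periodic2pi F) (a : Fin d → ℝ) :
    ∫ x in box d, F (x + a) = ∫ x in box d, F x := by
  rw [← setIntegral_congr_set (fund_ae d), ← setIntegral_congr_set (fund_ae d)]
  rw [(isFund d (fun _ => -Real.pi)).setIntegral_eq
    (isFund d (a + (fun _ => -Real.pi))) (periodic_lattice hF)]
  rw [← vadd_vadd]
  have h3 := ((measurePreserving_vadd a (volume : Measure (Fin d → ℝ))).setIntegral_image_emb
    (measurableEmbedding_const_vadd a)) F ((fun _ => -Real.pi : Fin d → ℝ) +ᵥ ZSpan.fundamentalDomain (lb d))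
  refine Eq.trans ?_ h3.symm
  simp [add_comm]

/-- truncation to coordinates `≥ k`. -/
def tr {d : ℕ} (k : ℕ) : (Fin d → ℝ) →L[ℝ] (Fin d → ℝ) :=
  ContinuousLinearMap.pi fun j => if k ≤ (j : ℕ) then ContinuousLinearMap.proj j else 0

lemma tr_apply {d : ℕ} (k : ℕ) (y : Fin d → ℝ) (j : Fin d) :
    tr k y j = if k ≤ (j : ℕ) then y j else 0 := by
  by_cases h : k ≤ (j : ℕ) <;> simp [tr, h]

lemma tr_zero {d : ℕ} (y : Fin d → ℝ) : tr 0 y = y := by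
  ext j; simp [tr_apply]

lemma tr_d {d : ℕ} (y : Fin d → ℝ) : tr d y = 0 := by
  ext j; have := j.2; simp [tr_apply]

lemma tr_single_ge {d : ℕ} (k : ℕ) (i : Fin d) (c : ℝ) (h : k ≤ i) :
    tr k (Pi.single i c) = Pi.single i c := by
  ext j; rw [tr_apply]
  by_cases hj : j = i
  · subst hj; simp [h]
  · simp [hj]

lemma tr_single_lt {d : ℕ} (k : ℕ) (i : Fin d) (c : ℝ) (h : ¬ k ≤ i) :
    tr k (Pi.single i c) = 0 := by
  ext j; rw [tr_apply]
  by_cases hj : j = i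
  · subst hj; simp [h]
  · simp [hj]

lemma tr_periodic {d : ℕ} {E : Type*} {F : (Fin d → ℝ) → E} (hF : Periodic2pi F) (k : ℕ)
    (x : Fin d → ℝ) : Periodic2pi (fun y => F (x + tr k y)) := by
  intro y i
  simp only [map_add]
  by_cases h : k ≤ (i : ℕ)
  · rw [tr_single_ge k i _ h, ← add_assoc, hF]
  · rw [tr_single_lt k i _ h, add_zero]

/-- the shift used for the `k`-th operator -/
def sh {d : ℕ} (k : Fin d) (y : Fin d → ℝ) : Fin d → ℝ := Pi.single k Real.pi + tr k y

lemma sh_continuous {d : ℕ} (k : Fin d) : Continuous (sh k) := by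
  unfold sh; fun_prop

lemma sh_eq {d : ℕ} (k : Fin d) (y : Fin d → ℝ) : sh k y = tr k (y + Pi.single k Real.pi) := by
  rw [map_add, tr_single_ge _ _ _ le_rfl, add_comm, sh]

lemma tr_update_pi {d : ℕ} (k : Fin d) (y : Fin d → ℝ) :
    sh k (Function.update y k Real.pi) =
      tr (k + 1) (Function.update y k Real.pi) + Pi.single k (2 * Real.pi) := by
  ext j
  simp only [sh, Pi.add_apply, tr_apply]
  by_cases h : j = k
  · subst h; simp; ring
  · have h' : (j : ℕ) ≠ k := fun hh => h (Fin.ext hh)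
    have : ((k : ℕ) + 1 ≤ j) = ((k : ℕ) ≤ j) := propext ⟨fun _ => by omega, fun _ => by omega⟩
    simp only [this]
    simp [h]

lemma tr_update_neg {d : ℕ} (k : Fin d) (y : Fin d → ℝ) :
    sh k (Function.update y k (-Real.pi)) = tr (k + 1) (Function.update y k (-Real.pi)) := by
  ext j
  simp only [sh, Pi.add_apply, tr_apply]
  by_cases h : j = k
  · subst h; simp
  · have h' : (j : ℕ) ≠ k := fun hh => h (Fin.ext hh)
    have : ((k : ℕ) + 1 ≤ j) = ((k : ℕ) ≤ j) := propext ⟨fun _ => by omega, fun _ => by omega⟩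
    simp only [this]
    simp [h]

/-- integration over the coordinates `≥ k`. -/
def EE {d : ℕ} (χ : (Fin d → ℝ) → ℝ) (x : Fin d → ℝ) (k : ℕ) : ℝ :=
  ∫ y in box d, χ (x + tr k y)

lemma pd_SS {d : ℕ} {χ : (Fin d → ℝ) → ℝ} (hχ : ContDiff ℝ (⊤ : ℕ∞) χ) (hp : Periodic2pi χ)
    (k : Fin d) (x : Fin d → ℝ) :
    pd k (SS (fun y => y k) (sh k) χ) x = EE χ x (k + 1) - EE χ x k := by
  have h1 : ContDiff ℝ 1 χ := hχ.of_le (by exact_mod_cast le_top)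
  have hc := h1.continuous
  have hc' : Continuous (fderiv ℝ χ) := h1.continuous_fderiv (by norm_num)
  have hsc := sh_continuous k
  have hint : ∀ {g : (Fin d → ℝ) → ℝ}, Continuous g → IntegrableOn g (box d) := fun hg =>
    ContinuousOn.integrableOn_compact (isCompact_box d) hg.continuousOn
  have hA : pd k (SS (fun y => y k) (sh k) χ) x = ∫ y in box d, y k * pd k χ (x + sh k y) := by
    unfold pd
    rw [(SS_hasFDerivAt (by fun_prop) hsc h1 x).fderiv]
    unfold SS
    rw [ContinuousLinearMap.integral_apply]
    · rfl
    · exact ContinuousOn.integrableOn_compact (isCompact_box d)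
        (Continuous.continuousOn (by fun_prop))
  have hB : ∫ y in box d, χ (x + sh k y) = EE χ x k := by
    unfold EE
    rw [← integral_translate (tr_periodic hp k x) (Pi.single k Real.pi)]
    simp only [sh_eq]
  set F : (Fin d → ℝ) → ℝ := fun y => y k * (χ (x + sh k y) - χ (x + tr (k + 1) y)) with hFdef
  have hFd : ContDiff ℝ 1 F := by
    simp only [hFdef, sh]
    fun_prop
  have hpdF : ∀ y, pd k F y = (χ (x + sh k y) - χ (x + tr (k + 1) y))
      + y k * pd k χ (x + sh k y) := by
    intro y
    have d0 : HasFDerivAt (fun y : Fin d → ℝ => y k) (ContinuousLinearMap.proj k) y :=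
      (ContinuousLinearMap.proj (R := ℝ) (φ := fun _ : Fin d => ℝ) k).hasFDerivAt
    have d1 : HasFDerivAt (fun y => χ (x + sh k y))
        ((fderiv ℝ χ (x + sh k y)).comp (tr k)) y := by
      refine HasFDerivAt.comp y (h1.differentiable (by norm_num) _).hasFDerivAt ?_
      exact (((tr k).hasFDerivAt).const_add (Pi.single k Real.pi)).const_add x
    have d2 : HasFDerivAt (fun y => χ (x + tr (k + 1) y))
        ((fderiv ℝ χ (x + tr (k + 1) y)).comp (tr (k + 1))) y := by
      refine HasFDerivAt.comp y (h1.differentiable (by norm_num) _).hasFDerivAt ?_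
      exact ((tr (k + 1)).hasFDerivAt).const_add x
    have d3 := d0.mul (d1.sub d2)
    have d4 : fderiv ℝ F y = _ := d3.fderiv
    unfold pd
    rw [d4]
    simp [tr_single_ge k.val k _ le_rfl, tr_single_lt (k.val + 1) k 1 (by omega)]
    ring
  have h0 : ∫ y in box d, pd k F y = 0 := by
    refine integral_pd_eq_zero k hFd fun y => ?_
    simp only [hFdef]
    rw [tr_update_pi, tr_update_neg, ← add_assoc, hp]
    simp
  simp only [hpdF] at h0
  have hcpd : Continuous (fun y => pd k χ (x + sh k y)) := by unfold pd; fun_prop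
  rw [integral_add (hint (by fun_prop)) (hint (by fun_prop)),
    integral_sub (hint (by fun_prop)) (hint (by fun_prop)), hB, ← hA] at h0
  unfold EE at h0 ⊢
  linarith

lemma sum_pd_SS {d : ℕ} {χ : (Fin d → ℝ) → ℝ} (hχ : ContDiff ℝ (⊤ : ℕ∞) χ) (hp : Periodic2pi χ)
    (h0 : ∫ x in box d, χ x = 0) (x : Fin d → ℝ) :
    ∑ k, pd k (SS (fun y => y k) (sh k) χ) x = volume.real (box d) * χ x := by
  simp only [pd_SS hχ hp]
  rw [Fin.sum_univ_eq_sum_range (fun k => EE χ x (k + 1) - EE χ x k) d, Finset.sum_range_sub]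
  have e1 : EE χ x d = volume.real (box d) * χ x := by
    unfold EE; simp [tr_d]
  have e2 : EE χ x 0 = 0 := by
    unfold EE
    simp only [tr_zero, add_comm x]
    rw [integral_translate hp, h0]
  rw [e1, e2, sub_zero]

lemma volume_box_ne (d : ℕ) : volume.real (box d) ≠ 0 := by
  have : volume.real (box d) = (2 * Real.pi) ^ d := by
    rw [box_eq, Measure.real, Real.volume_Icc_pi]
    simp only [sub_neg_eq_add, ← two_mul, Finset.prod_const, Finset.card_univ, Fintype.card_fin]
    rw [ENNReal.toReal_pow, ENNReal.toReal_ofReal (by positivity)]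
  rw [this]; positivity


open scoped Pointwise in
lemma aesm_full {d : ℕ} {g : (Fin d → ℝ) → ℝ} (hg : Periodic2pi g)
    (hi : IntegrableOn g (box d)) : AEStronglyMeasurable g volume := by
  rw [← integrableOn_congr_set_ae (fund_ae d)] at hi
  rw [← (isFund d (fun _ => -Real.pi)).sum_restrict, aestronglyMeasurable_sum_measure_iff]
  intro v
  have h2 := ((isFund d (fun _ => -Real.pi)).integrableOn_iff
    (isFund d ((v : Fin d → ℝ) + (fun _ => -Real.pi))) (periodic_lattice hg)).1 hi
  rw [← vadd_vadd] at h2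
  exact h2.aestronglyMeasurable

/-- kernel integrability -/
lemma integrable_kernel {d : ℕ} {g : (Fin d → ℝ) → ℝ} (hg : Periodic2pi g)
    (hi : IntegrableOn g (box d)) (k : Fin d) :
    Integrable (fun p : (Fin d → ℝ) × (Fin d → ℝ) => p.2 k * g (p.1 - sh k p.2))
      ((volume.restrict (box d)).prod (volume.restrict (box d))) := by
  have hsc := sh_continuous k
  have hm : AEStronglyMeasurable
      (fun p : (Fin d → ℝ) × (Fin d → ℝ) => p.2 k * g (p.1 - sh k p.2))
      ((volume.restrict (box d)).prod (volume.restrict (box d))) := by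
    have hmp : MeasurePreserving
        (fun p : (Fin d → ℝ) × (Fin d → ℝ) => (p.1, p.2 - sh k p.1))
        ((volume : Measure (Fin d → ℝ)).prod (volume : Measure (Fin d → ℝ)))
        ((volume : Measure (Fin d → ℝ)).prod (volume : Measure (Fin d → ℝ))) :=
      MeasurePreserving.skew_product (g := fun y x => x - sh k y) (MeasurePreserving.id volume)
        (Continuous.measurable (by unfold Function.uncurry; fun_prop))
        (Filter.Eventually.of_forall fun y => (measurePreserving_sub_right volume (sh k y)).map_eq)
    have h1 : AEStronglyMeasurable
        (fun p : (Fin d → ℝ) × (Fin d → ℝ) => g (p.2 - sh k p.1))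
        ((volume : Measure (Fin d → ℝ)).prod (volume : Measure (Fin d → ℝ))) :=
      (aesm_full hg hi).comp_quasiMeasurePreserving
        (Measure.quasiMeasurePreserving_snd.comp hmp.quasiMeasurePreserving)
    have h2 := h1.prod_swap
    rw [Measure.prod_restrict]
    refine AEStronglyMeasurable.mul (Continuous.aestronglyMeasurable (by fun_prop)) ?_
    exact h2.restrict
  rw [integrable_prod_iff' hm]
  constructor
  · refine Filter.Eventually.of_forall fun y => ?_
    have := integrableOn_translate hg (-(sh k y)) hi
    simp only [← sub_eq_add_neg] at this
    exact Integrable.const_mul this (y k)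
  · have : ∀ y : Fin d → ℝ, ∫ x in box d, ‖y k * g (x - sh k y)‖
        = ‖y k‖ * ∫ x in box d, ‖g x‖ := by
      intro y
      simp only [norm_mul]
      rw [integral_const_mul]
      congr 1
      have hn : Periodic2pi (fun x => ‖g x‖) := fun x i => by simp only [hg x i]
      rw [← integral_translate hn (-(sh k y))]
      simp only [← sub_eq_add_neg]
    simp only [this]
    exact ContinuousOn.integrableOn_compact (isCompact_box d)
        (Continuous.continuousOn (by fun_prop))

lemma bdd_prod {d : ℕ} {G : (Fin d → ℝ) × (Fin d → ℝ) → ℝ} (hG : Continuous G) :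
    ∃ C, ∀ᵐ p ∂((volume.restrict (box d)).prod (volume.restrict (box d))), ‖G p‖ ≤ C := by
  obtain ⟨C, hC⟩ := ((isCompact_box d).prod (isCompact_box d)).exists_bound_of_continuousOn
    hG.continuousOn
  refine ⟨C, ?_⟩
  rw [Measure.prod_restrict]
  exact (ae_restrict_iff' ((measurableSet_box d).prod (measurableSet_box d))).2
    (Filter.Eventually.of_forall hC)

lemma adjoint {d : ℕ} {g : (Fin d → ℝ) → ℝ} (hg : Periodic2pi g)
    (hi : IntegrableOn g (box d)) (k : Fin d) {χ : (Fin d → ℝ) → ℝ} (hχ : Continuous χ)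
    (hp : Periodic2pi χ) :
    ∫ x in box d, g x * SS (fun y => y k) (sh k) χ x =
      ∫ x in box d, (∫ y in box d, y k * g (x - sh k y)) * χ x := by
  have hsc := sh_continuous k
  have i1 : Integrable (fun p : (Fin d → ℝ) × (Fin d → ℝ) =>
      g p.1 * (p.2 k * χ (p.1 + sh k p.2)))
      ((volume.restrict (box d)).prod (volume.restrict (box d))) := by
    have hG : Continuous (fun p : (Fin d → ℝ) × (Fin d → ℝ) => p.2 k * χ (p.1 + sh k p.2)) := by
      fun_prop
    obtain ⟨C, hC⟩ := bdd_prod hG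
    have h := Integrable.comp_fst (ν := volume.restrict (box d)) hi
    exact h.mul_bdd (c := C) hG.aestronglyMeasurable hC
  have i2 : Integrable (fun p : (Fin d → ℝ) × (Fin d → ℝ) =>
      (p.2 k * g (p.1 - sh k p.2)) * χ p.1)
      ((volume.restrict (box d)).prod (volume.restrict (box d))) := by
    have hG : Continuous (fun p : (Fin d → ℝ) × (Fin d → ℝ) => χ p.1) := by
      fun_prop
    obtain ⟨C, hC⟩ := bdd_prod hG
    exact (integrable_kernel hg hi k).mul_bdd (c := C) hG.aestronglyMeasurable hC
  have l1 : ∀ x, g x * SS (fun y => y k) (sh k) χ x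
      = ∫ y in box d, g x * (y k * χ (x + sh k y)) := by
    intro x; rw [integral_const_mul]; rfl
  have l2 : ∀ x, (∫ y in box d, y k * g (x - sh k y)) * χ x
      = ∫ y in box d, (y k * g (x - sh k y)) * χ x := by
    intro x; rw [integral_mul_const]
  simp only [l1, l2]
  refine (integral_integral_swap i1).trans (Eq.trans ?_ (integral_integral_swap i2).symm)
  congr 1; ext y
  have hper : Periodic2pi (fun x => (y k * g (x - sh k y)) * χ x) := by
    intro x i
    simp only [hp x i]
    rw [add_sub_right_comm, hg]
  rw [← integral_translate hper (sh k y)]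
  congr 1; ext x
  simp only [add_sub_cancel_right]
  ring

lemma pd_contDiff {d : ℕ} {ψ : (Fin d → ℝ) → ℝ} (hψ : ContDiff ℝ (⊤ : ℕ∞) ψ) (i : Fin d) :
    ContDiff ℝ (⊤ : ℕ∞) (pd i ψ) := by
  unfold pd
  exact (hψ.fderiv_right (by exact_mod_cast le_top)).clm_apply contDiff_const

lemma pd_periodic {d : ℕ} {ψ : (Fin d → ℝ) → ℝ} (hp : Periodic2pi ψ) (i : Fin d) :
    Periodic2pi (pd i ψ) := by
  intro x j
  unfold pd
  rw [← fderiv_comp_add_right (𝕜 := ℝ) (f := ψ) (Pi.single j (2 * Real.pi))]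
  congr 2
  ext1 z; exact hp z j

/-- if `f ∈ L¹(𝕋^d)` has mean zero and is orthogonal to every smooth
divergence-free mean-zero vector field, then `f = ∇p` (in the weak sense) for some
`p ∈ W^{1,1}(𝕋^d)` (`p ∈ L¹` and its weak gradient is `f ∈ L¹`). -/
theorem gradient_representation (d : ℕ) (hd : 2 ≤ d)
    (f : (Fin d → ℝ) → EuclideanSpace ℝ (Fin d))
    (hfper : Periodic2pi f) (hfint : IntegrableOn f (box d))
    (hfmean : (∫ x in box d, f x) = 0)
    (horth : ∀ φ : (Fin d → ℝ) → EuclideanSpace ℝ (Fin d),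
      ContDiff ℝ (⊤ : ℕ∞) φ → Periodic2pi φ →
      (∀ x, ∑ i, pd i φ x i = 0) →
      (∫ x in box d, φ x) = 0 →
      (∫ x in box d, ⟪f x, φ x⟫_ℝ) = 0) :
    ∃ p : (Fin d → ℝ) → ℝ, Periodic2pi p ∧ IntegrableOn p (box d) ∧
      ∀ ψ : (Fin d → ℝ) → ℝ, ContDiff ℝ (⊤ : ℕ∞) ψ → Periodic2pi ψ →
        ∀ i, (∫ x in box d, f x i * ψ x) = -∫ x in box d, p x * pd i ψ x := by
  have hgper : ∀ k, Periodic2pi (fun x => f x k) := fun k x i => by simp only [hfper x i]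
  have hgint : ∀ k, IntegrableOn (fun x => f x k) (box d) := fun k =>
    (EuclideanSpace.proj k : EuclideanSpace ℝ (Fin d) →L[ℝ] ℝ).integrable_comp hfint
  set V : ℝ := volume.real (box d) with hV
  have hV0 : V ≠ 0 := volume_box_ne d
  have hqint : ∀ k : Fin d, IntegrableOn
      (fun x => ∫ y in box d, y k * f (x - sh k y) k) (box d) := fun k =>
    (integrable_kernel (hgper k) (hgint k) k).integral_prod_left
  refine ⟨fun x => -(V⁻¹ * ∑ k, ∫ y in box d, y k * f (x - sh k y) k), ?_, ?_, ?_⟩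
  · intro x i
    simp only [add_sub_right_comm, hfper _ i]
  · exact ((integrable_finsetSum _ fun k _ => hqint k).const_mul _).neg
  intro ψ hψ hψp i
  set χ := pd i ψ with hχdef
  have hχ : ContDiff ℝ (⊤ : ℕ∞) χ := pd_contDiff hψ i
  have hχp : Periodic2pi χ := pd_periodic hψp i
  have hχ0 : ∫ x in box d, χ x = 0 :=
    integral_pd_eq_zero i (hψ.of_le (by exact_mod_cast le_top)) (periodic_update hψp i)
  set S : Fin d → (Fin d → ℝ) → ℝ := fun k => SS (fun y => y k) (sh k) χ with hS
  have hSd : ∀ k, ContDiff ℝ (⊤ : ℕ∞) (S k) := fun k =>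
    SS_contDiff (by fun_prop) (sh_continuous k) hχ
  have hSp : ∀ k, Periodic2pi (S k) := fun k => SS_periodic _ _ hχp
  set u : Fin d → (Fin d → ℝ) → ℝ := fun k x => (if k = i then ψ x else 0) - V⁻¹ * S k x with hu
  have hud : ∀ k, ContDiff ℝ (⊤ : ℕ∞) (u k) := by
    intro k
    have := hSd k
    by_cases h : k = i
    · simp only [hu, h, if_true]; fun_prop
    · simp only [hu, h, if_false]; fun_prop
  set φ₀ : (Fin d → ℝ) → EuclideanSpace ℝ (Fin d) := fun x => WithLp.toLp 2 (fun k => u k x)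
    with hφ₀
  have hφ₀d : ContDiff ℝ (⊤ : ℕ∞) φ₀ := contDiff_euclidean.2 hud
  have hφ₀p : Periodic2pi φ₀ := by
    intro x j
    simp only [hφ₀, hu, hψp x j, hSp _ x j]
  have hφ₀i : IntegrableOn φ₀ (box d) :=
    ContinuousOn.integrableOn_compact (isCompact_box d) hφ₀d.continuous.continuousOn
  set m : EuclideanSpace ℝ (Fin d) := V⁻¹ • ∫ x in box d, φ₀ x with hm
  have hfu : ∀ k, IntegrableOn (fun x => f x k * u k x) (box d) := fun k =>
    (hgint k).mul_continuousOn (hud k).continuous.continuousOn (isCompact_box d)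
  have hin : ∀ x, ⟪f x, φ₀ x⟫_ℝ = ∑ k, f x k * u k x := by
    intro x
    simp [PiLp.inner_apply, hφ₀, mul_comm]
  have horth' := horth (fun x => φ₀ x - m) (hφ₀d.sub contDiff_const)
    (fun x j => by simp only [hφ₀p x j]) ?_ ?_
  · have e1 : ∫ x in box d, ⟪f x, φ₀ x - m⟫_ℝ
        = (∫ x in box d, ⟪f x, φ₀ x⟫_ℝ) - ∫ x in box d, ⟪f x, m⟫_ℝ := by
      simp only [inner_sub_right]
      refine integral_sub ?_ (hfint.inner_const m)
      simp only [hin]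
      exact integrable_finsetSum _ fun k _ => hfu k
    have e2 : ∫ x in box d, ⟪f x, m⟫_ℝ = 0 := by
      simp only [real_inner_comm m]
      rw [integral_inner hfint, hfmean, inner_zero_right]
    rw [e1, e2, sub_zero] at horth'
    simp only [hin] at horth'
    rw [integral_finsetSum _ fun k _ => hfu k] at horth'
    have hfS : ∀ k, IntegrableOn (fun x => f x k * S k x) (box d) := fun k =>
      (hgint k).mul_continuousOn (hSd k).continuous.continuousOn (isCompact_box d)
    have hfψ : ∀ k, IntegrableOn (fun x => f x k * (if k = i then ψ x else 0)) (box d) := by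
      intro k
      refine (hgint k).mul_continuousOn (Continuous.continuousOn ?_) (isCompact_box d)
      have := hψ.continuous
      by_cases h : k = i
      · simpa only [h, if_true]
      · simp only [h, if_false]; exact continuous_const
    have e3 : ∀ k, ∫ x in box d, f x k * u k x =
        (if k = i then ∫ x in box d, f x i * ψ x else 0) - V⁻¹ * ∫ x in box d, f x k * S k x := by
      intro k
      have : ∀ x, f x k * u k x
          = f x k * (if k = i then ψ x else 0) - V⁻¹ * (f x k * S k x) := by
        intro x; simp only [hu]; ring
      simp only [this]
      rw [integral_sub (hfψ k) ((hfS k).const_mul _), integral_const_mul]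
      congr 1
      by_cases h : k = i
      · subst h; simp
      · simp [h]
    simp only [e3] at horth'
    rw [Finset.sum_sub_distrib, Finset.sum_ite_eq' Finset.univ i, if_pos (Finset.mem_univ i),
      ← Finset.mul_sum] at horth'
    have e4 : ∀ k, ∫ x in box d, f x k * S k x
        = ∫ x in box d, (∫ y in box d, y k * f (x - sh k y) k) * χ x := fun k =>
      adjoint (hgper k) (hgint k) k hχ.continuous hχp
    have hqχ : ∀ k : Fin d, IntegrableOn
        (fun x => (∫ y in box d, y k * f (x - sh k y) k) * χ x) (box d) := fun k =>
      (hqint k).mul_continuousOn hχ.continuous.continuousOn (isCompact_box d)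
    have e5 : ∫ x in box d, -(V⁻¹ * ∑ k, ∫ y in box d, y k * f (x - sh k y) k) * χ x
        = -(V⁻¹ * ∑ k, ∫ x in box d, f x k * S k x) := by
      simp only [e4]
      rw [← integral_finsetSum _ fun k _ => hqχ k, ← integral_const_mul, ← integral_neg]
      congr 1; ext x
      rw [← Finset.sum_mul]; ring
    rw [e5, neg_neg]
    linarith
  · intro x
    have h1 : ∀ k, pd k (fun x => φ₀ x - m) x k = pd k (u k) x := by
      intro k
      have hd0 : HasFDerivAt φ₀ (fderiv ℝ φ₀ x) x :=
        (hφ₀d.differentiable (by simp) x).hasFDerivAt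
      have h2 : HasFDerivAt (u k)
          ((EuclideanSpace.proj k : EuclideanSpace ℝ (Fin d) →L[ℝ] ℝ).comp (fderiv ℝ φ₀ x)) x :=
        (EuclideanSpace.proj k : EuclideanSpace ℝ (Fin d) →L[ℝ] ℝ).hasFDerivAt.comp x hd0
      unfold pd
      rw [h2.fderiv, (hd0.sub_const m).fderiv]
      rfl
    have h3 : ∀ k, pd k (u k) x = (if k = i then χ x else 0) - V⁻¹ * pd k (S k) x := by
      intro k
      have hs : HasFDerivAt (S k) (fderiv ℝ (S k) x) x :=
        ((hSd k).differentiable (by simp) x).hasFDerivAt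
      have hs' := hs.const_mul V⁻¹
      by_cases h : k = i
      · subst h
        have hp : HasFDerivAt ψ (fderiv ℝ ψ x) x :=
          (hψ.differentiable (by simp) x).hasFDerivAt
        have h4 : fderiv ℝ (u k) x = fderiv ℝ ψ x - V⁻¹ • fderiv ℝ (S k) x := by
          have := hp.sub hs'
          simp only [hu, if_true]
          exact this.fderiv
        simp [pd, h4, hχdef]
      · have h4 : fderiv ℝ (u k) x = 0 - V⁻¹ • fderiv ℝ (S k) x := by
          have := (hasFDerivAt_const (0:ℝ) x).sub hs'
          simp only [hu, h, if_false]
          exact this.fderiv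
        simp [pd, h4, h]
    simp only [h1, h3]
    rw [Finset.sum_sub_distrib, Finset.sum_ite_eq' Finset.univ i, if_pos (Finset.mem_univ i),
      ← Finset.mul_sum, sum_pd_SS hχ hχp hχ0 x, ← hV, ← mul_assoc, inv_mul_cancel₀ hV0, one_mul,
      sub_self]
  · rw [integral_sub hφ₀i (integrable_const m), setIntegral_const, ← hV, hm, smul_smul,
      mul_inv_cancel₀ hV0, one_smul, sub_self]

end
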